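/- (Factorization of encoder 1's conditional belief.) Fix arbitrary deterministic encoding rules f²_{1:T}, memory update rules l¹_{1:T}, l²_{1:T}, and a deterministic encoding strategy for encoder 1. Then for every t, every realization (x_{1:t}, z_{1:t}) of (X¹_{1:t}, Z¹_{1:t}) with positive probability, and all values x², a, y¹, y², m¹, m²: P(X²_t = x², A = a, Y¹_t = y¹, Y²_t = y², M¹_{t-1} = m¹, M²_{t-1} = m² | X¹_{1:t} = x_{1:t}, Z¹_{1:t} = z_{1:t}) = P(X²_t = x², Y²_t = y², M²_{t-1} = m² | A = a) · P(Y¹_t = y¹ | Z¹_t = z_t) · μ¹_t(m¹) · b¹_t(a), where b¹_t(a) = P(A = a | X¹_{1:t} = x_{1:t}) and μ¹_t(m) = P(M¹_{t-1} = m | Z¹_{1:t-1} = z_{1:t-1}) (with μ¹_1 ≡ 0 interpreted via M¹_0 := 0). -/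

import Mathlib

/-!
The joint law is a product: given `A = a`, the path `X¹`, the pair `(X², N²)` and the noise `N¹`
are independent with total masses one, so an event which constrains these blocks separately has
probability `∑ a, pA a · P(X¹ ∈ B ∣ a) · P((X², N²) ∈ C ∣ a) · P(N¹ ∈ D)`
(`Pr_jointP_of_iff`).

Conditioning on a history of positive probability forces `z_s` to be the symbol produced by
`x_{0:s}`. On the event `Z¹ = z` the output `Y¹_t` is a function of `N¹_t` and the memory
`M¹_{t-1}` a function of `N¹_{0:t-1}`, so each event of the theorem is of block form.
Independence of the coordinates of `N¹` (`Pr_prod_split`) separates `Y¹_t` from `M¹_{t-1}`.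
Each conditional probability is then a quotient in which the blocks not concerned
cancel. If `pA a = 0`, the junk value of the conditional probability given `A = a` is harmless,
since both sides vanish.
-/

open Finset

namespace MTC

noncomputable section

/-- Probability of an event `E` under the weight function `p` on a finite sample space. -/
def Pr {Ω : Type*} [Fintype Ω] (p : Ω → ℝ) (E : Set Ω) : ℝ :=
  ∑ ω, E.indicator p ω

/-- Conditional probability `P(E ∣ F)`. -/
def cPr {Ω : Type*} [Fintype Ω] (p : Ω → ℝ) (E F : Set Ω) : ℝ :=
  Pr p (E ∩ F) / Pr p F

/-- Conditional expectation `E[φ ∣ F]`. -/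
def cExp {Ω : Type*} [Fintype Ω] (p : Ω → ℝ) (φ : Ω → ℝ) (F : Set Ω) : ℝ :=
  (∑ ω, F.indicator (fun ω' => p ω' * φ ω') ω) / Pr p F

/-- Extension of a trajectory `x : Fin T → X` to all of `ℕ` (junk after time `T-1`). -/
def pad {X : Type*} [Inhabited X] {T : ℕ} (x : Fin T → X) (n : ℕ) : X :=
  if h : n < T then x ⟨n, h⟩ else default

/-- A deterministic encoding strategy: at each (0-indexed) time `t` the transmitted symbol
is an arbitrary function of the observation history `X_{0:t}` and the past transmitted
symbols `Z_{0:t-1}`. -/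
abbrev Strat (X Z : Type*) := (t : ℕ) → (Fin (t + 1) → X) → (Fin t → Z) → Z

/-- The transmitted-symbol process generated by strategy `f` on observation path `x`. -/
def Zseq {X Z : Type*} (f : Strat X Z) (x : ℕ → X) : ℕ → Z
  | t => f t (fun i => x i.val) (fun i => Zseq f x i.val)
  termination_by t => t
  decreasing_by exact i.isLt

/-- The receiver-memory process: `Mseq l y t` is the memory content `M_{t-1}` of the paper
(after the symbols `y_0, …, y_{t-1}` have been processed), with the convention
`M_0 := default` (the paper's `M_0 := 0`). -/
def Mseq {Y M : Type*} [Inhabited M] (l : ℕ → M → Y → M) (y : ℕ → Y) : ℕ → M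
  | 0 => default
  | t + 1 => l t (Mseq l y t) (y t)

/-- Weight of a trajectory of a (time-inhomogeneous) Markov chain with initial law
`init a` and transition kernels `K t a`, for a given value `a` of the coupling
random variable. -/
def chainW {A X : Type*} [Inhabited X] (T : ℕ) (init : A → X → ℝ)
    (K : ℕ → A → X → X → ℝ) (a : A) (x : Fin T → X) : ℝ :=
  if T = 0 then 1
  else init a (pad x 0) * ∏ t ∈ Finset.range (T - 1), K t a (pad x t) (pad x (t + 1))

/-- Canonical sample space: the coupling variable `A`, the two source trajectories and
the two channel-noise trajectories. -/
abbrev Samp (A X1 X2 N1 N2 : Type*) (T : ℕ) :=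
  A × (Fin T → X1) × (Fin T → X2) × (Fin T → N1) × (Fin T → N2)

variable {A X1 X2 Z1 Z2 N1 N2 Y1 Y2 M1 M2 : Type*}

/-- The joint law of `(A, X¹_{1:T}, X²_{1:T}, N¹_{1:T}, N²_{1:T})`:
`P(X¹_1, X²_1, A) = P(X¹_1|A) P(X²_1|A) P(A)`, conditioned on `A` the two source
components are independent Markov chains with kernels `K1, K2`, and the channel noises
are mutually independent and independent of the source. -/
def jointP [Inhabited X1] [Inhabited X2] (T : ℕ)
    (pA : A → ℝ) (init1 : A → X1 → ℝ) (K1 : ℕ → A → X1 → X1 → ℝ)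
    (init2 : A → X2 → ℝ) (K2 : ℕ → A → X2 → X2 → ℝ)
    (q1 : ℕ → N1 → ℝ) (q2 : ℕ → N2 → ℝ) : Samp A X1 X2 N1 N2 T → ℝ :=
  fun ω =>
    pA ω.1 * chainW T init1 K1 ω.1 ω.2.1 * chainW T init2 K2 ω.1 ω.2.2.1 *
      (∏ t : Fin T, q1 t.val (ω.2.2.2.1 t)) * (∏ t : Fin T, q2 t.val (ω.2.2.2.2 t))

variable (T : ℕ)

/-- Encoder 1's transmitted symbol `Z¹_t` (a deterministic function of `X¹_{0:t}`). -/
def Z1f [Inhabited X1] (f1 : Strat X1 Z1) (ω : Samp A X1 X2 N1 N2 T) : ℕ → Z1 :=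
  Zseq f1 (pad ω.2.1)

/-- Encoder 2's transmitted symbol `Z²_t`. -/
def Z2f [Inhabited X2] (f2 : Strat X2 Z2) (ω : Samp A X1 X2 N1 N2 T) : ℕ → Z2 :=
  Zseq f2 (pad ω.2.2.1)

/-- Channel-1 output `Y¹_t = h¹_t(Z¹_t, N¹_t)`. -/
def Y1f [Inhabited X1] [Inhabited N1] (h1 : ℕ → Z1 → N1 → Y1) (f1 : Strat X1 Z1)
    (ω : Samp A X1 X2 N1 N2 T) : ℕ → Y1 :=
  fun t => h1 t (Z1f T f1 ω t) (pad ω.2.2.2.1 t)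

/-- Channel-2 output `Y²_t = h²_t(Z²_t, N²_t)`. -/
def Y2f [Inhabited X2] [Inhabited N2] (h2 : ℕ → Z2 → N2 → Y2) (f2 : Strat X2 Z2)
    (ω : Samp A X1 X2 N1 N2 T) : ℕ → Y2 :=
  fun t => h2 t (Z2f T f2 ω t) (pad ω.2.2.2.2 t)

/-- Receiver memory `M¹_{t-1}` for channel 1. -/
def M1f [Inhabited X1] [Inhabited N1] [Inhabited M1] (h1 : ℕ → Z1 → N1 → Y1)
    (f1 : Strat X1 Z1) (l1 : ℕ → M1 → Y1 → M1) (ω : Samp A X1 X2 N1 N2 T) : ℕ → M1 :=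
  Mseq l1 (Y1f T h1 f1 ω)

/-- Receiver memory `M²_{t-1}` for channel 2. -/
def M2f [Inhabited X2] [Inhabited N2] [Inhabited M2] (h2 : ℕ → Z2 → N2 → Y2)
    (f2 : Strat X2 Z2) (l2 : ℕ → M2 → Y2 → M2) (ω : Samp A X1 X2 N1 N2 T) : ℕ → M2 :=
  Mseq l2 (Y2f T h2 f2 ω)

/-- The receiver's estimate `X̂_t = g_t(Y¹_t, Y²_t, M¹_{t-1}, M²_{t-1})`. -/
def estf [Inhabited X1] [Inhabited X2] [Inhabited N1] [Inhabited N2]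
    [Inhabited M1] [Inhabited M2]
    (h1 : ℕ → Z1 → N1 → Y1) (h2 : ℕ → Z2 → N2 → Y2)
    (f1 : Strat X1 Z1) (f2 : Strat X2 Z2)
    (l1 : ℕ → M1 → Y1 → M1) (l2 : ℕ → M2 → Y2 → M2)
    (g : ℕ → Y1 → Y2 → M1 → M2 → X1 × X2 × A) (ω : Samp A X1 X2 N1 N2 T) :
    ℕ → X1 × X2 × A :=
  fun t => g t (Y1f T h1 f1 ω t) (Y2f T h2 f2 ω t) (M1f T h1 f1 l1 ω t) (M2f T h2 f2 l2 ω t)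

/-- The state `X_t = (X¹_t, X²_t, A)` of the source. -/
def Xst [Inhabited X1] [Inhabited X2] (ω : Samp A X1 X2 N1 N2 T) (t : ℕ) : X1 × X2 × A :=
  (pad ω.2.1 t, pad ω.2.2.1 t, ω.1)

/-- Expected total distortion `J = E[∑_{t=1}^T ρ_t(X_t, X̂_t)]`. -/
def J [Fintype A] [Fintype X1] [Fintype X2] [Fintype N1] [Fintype N2]
    [Inhabited X1] [Inhabited X2] [Inhabited N1] [Inhabited N2]
    [Inhabited M1] [Inhabited M2]
    (p : Samp A X1 X2 N1 N2 T → ℝ)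
    (h1 : ℕ → Z1 → N1 → Y1) (h2 : ℕ → Z2 → N2 → Y2)
    (ρ : ℕ → X1 × X2 × A → X1 × X2 × A → ℝ)
    (f1 : Strat X1 Z1) (f2 : Strat X2 Z2)
    (g : ℕ → Y1 → Y2 → M1 → M2 → X1 × X2 × A)
    (l1 : ℕ → M1 → Y1 → M1) (l2 : ℕ → M2 → Y2 → M2) : ℝ :=
  ∑ ω, p ω * ∑ t ∈ Finset.range T, ρ t (Xst T ω t) (estf T h1 h2 f1 f2 l1 l2 g ω t)

/-- Encoder 1's belief on `A`: `b¹_t(a) = P(A = a ∣ X¹_{0:t} = xs_{0:t})`. -/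
def belA [Fintype A] [Fintype X1] [Fintype X2] [Fintype N1] [Fintype N2]
    [Inhabited X1]
    (p : Samp A X1 X2 N1 N2 T → ℝ) (t : ℕ) (xs : ℕ → X1) : A → ℝ :=
  fun a => cPr p {ω : Samp A X1 X2 N1 N2 T | ω.1 = a} {ω | ∀ s ≤ t, pad ω.2.1 s = xs s}

/-- Encoder 1's belief on the receiver memory:
`μ¹_t(m) = P(M¹_{t-1} = m ∣ Z¹_{0:t-1} = zs_{0:t-1})`. -/
def belM [Fintype A] [Fintype X1] [Fintype X2] [Fintype N1] [Fintype N2]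
    [Inhabited X1] [Inhabited N1] [Inhabited M1]
    (p : Samp A X1 X2 N1 N2 T → ℝ) (h1 : ℕ → Z1 → N1 → Y1)
    (f1 : Strat X1 Z1) (l1 : ℕ → M1 → Y1 → M1) (t : ℕ) (zs : ℕ → Z1) : M1 → ℝ :=
  fun m =>
    cPr p {ω : Samp A X1 X2 N1 N2 T | M1f T h1 f1 l1 ω t = m}
      {ω | ∀ s < t, Z1f T f1 ω s = zs s}

/-- Encoder 2's belief on `A`. -/
def belA2 [Fintype A] [Fintype X1] [Fintype X2] [Fintype N1] [Fintype N2]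
    [Inhabited X2]
    (p : Samp A X1 X2 N1 N2 T → ℝ) (t : ℕ) (xs : ℕ → X2) : A → ℝ :=
  fun a => cPr p {ω : Samp A X1 X2 N1 N2 T | ω.1 = a} {ω | ∀ s ≤ t, pad ω.2.2.1 s = xs s}

/-- Encoder 2's belief on the receiver memory. -/
def belM2 [Fintype A] [Fintype X1] [Fintype X2] [Fintype N1] [Fintype N2]
    [Inhabited X2] [Inhabited N2] [Inhabited M2]
    (p : Samp A X1 X2 N1 N2 T → ℝ) (h2 : ℕ → Z2 → N2 → Y2)
    (f2 : Strat X2 Z2) (l2 : ℕ → M2 → Y2 → M2) (t : ℕ) (zs : ℕ → Z2) : M2 → ℝ :=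
  fun m =>
    cPr p {ω : Samp A X1 X2 N1 N2 T | M2f T h2 f2 l2 ω t = m}
      {ω | ∀ s < t, Z2f T f2 ω s = zs s}

end

/-! ### Causality of the encoder and memory recursions -/

lemma Zseq_congr {X Z : Type*} (f : Strat X Z) (x x' : ℕ → X) (t : ℕ)
    (h : ∀ s ≤ t, x s = x' s) : Zseq f x t = Zseq f x' t := by
  induction t using Nat.strong_induction_on with
  | _ t ih =>
    rw [Zseq, Zseq]
    congr 1
    · funext i
      exact h i.val (Nat.lt_succ_iff.mp i.isLt)
    · funext i
      exact ih i.val i.isLt fun s hs => h s (hs.trans i.isLt.le)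

lemma Mseq_congr {Y M : Type*} [Inhabited M] (l : ℕ → M → Y → M) (y y' : ℕ → Y) (t : ℕ)
    (h : ∀ s < t, y s = y' s) : Mseq l y t = Mseq l y' t := by
  induction t with
  | zero => rfl
  | succ t ih =>
    rw [Mseq, Mseq, h t t.lt_succ_self, ih fun s hs => h s (hs.trans t.lt_succ_self)]

/-! ### Finite weighted probability -/

lemma Pr_eq_sum_ite {Ω : Type*} [Fintype Ω] (p : Ω → ℝ) (E : Set Ω) [DecidablePred (· ∈ E)] :
    Pr p E = ∑ ω, if ω ∈ E then p ω else 0 := by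
  simp only [Pr, Set.indicator_apply]

lemma Pr_univ {Ω : Type*} [Fintype Ω] (p : Ω → ℝ) : Pr p Set.univ = ∑ ω, p ω := by
  simp [Pr]

lemma Pr_mono {Ω : Type*} [Fintype Ω] {p : Ω → ℝ} (hp : ∀ ω, 0 ≤ p ω) {E F : Set Ω}
    (h : E ⊆ F) : Pr p E ≤ Pr p F :=
  Finset.sum_le_sum fun ω _ => Set.indicator_le_indicator_of_subset h hp ω

lemma nonempty_of_Pr_pos {Ω : Type*} [Fintype Ω] {p : Ω → ℝ} {E : Set Ω} (h : 0 < Pr p E) :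
    E.Nonempty := by
  rw [Set.nonempty_iff_ne_empty]
  rintro rfl
  simp [Pr] at h

lemma sum_prod_eq_one {N : Type*} [Fintype N] {T : ℕ} (q : ℕ → N → ℝ)
    (hq : ∀ t, ∑ n, q t n = 1) : ∑ n : Fin T → N, ∏ t : Fin T, q t.val (n t) = 1 := by
  classical
  have h := Finset.prod_univ_sum (fun _ : Fin T => (Finset.univ : Finset N))
    (fun t n => q t.val n)
  simpa [hq] using h.symm

/-- Under a product law, an event about coordinate `t` is independent of an event that does not
depend on coordinate `t`. -/
lemma Pr_prod_split {N : Type*} [Fintype N] {T : ℕ} (q : ℕ → N → ℝ)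
    (hq : ∀ t, ∑ n, q t n = 1) (t : Fin T) (φ : N → Prop) (D : Set (Fin T → N))
    (hD : ∀ n n' : Fin T → N, (∀ s, s ≠ t → n s = n' s) → (n ∈ D ↔ n' ∈ D)) :
    Pr (fun n : Fin T → N => ∏ s : Fin T, q s.val (n s)) {n | φ (n t) ∧ n ∈ D} =
      Pr (fun n : Fin T → N => ∏ s : Fin T, q s.val (n s)) {n | φ (n t)} *
        Pr (fun n : Fin T → N => ∏ s : Fin T, q s.val (n s)) D := by
  classical
  let e := Equiv.funSplitAt t N
  let D' : ({j // j ≠ t} → N) → Prop := fun v => ∃ u, e.symm (u, v) ∈ D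
  let r : ({j // j ≠ t} → N) → ℝ := fun v => ∏ j, q j.val.val (v j)
  have hD' : ∀ u v, e.symm (u, v) ∈ D ↔ D' v := by
    intro u v
    refine ⟨fun h => ⟨u, h⟩, ?_⟩
    rintro ⟨u', h⟩
    refine (hD _ _ fun s hs => ?_).mp h
    simp [e, Equiv.funSplitAt, Equiv.piSplitAt, hs]
  have ht : ∀ u v, e.symm (u, v) t = u := by
    intro u v
    simp [e, Equiv.funSplitAt, Equiv.piSplitAt]
  have hw : ∀ u v, ∏ s : Fin T, q s.val (e.symm (u, v) s) = q t.val u * r v := by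
    intro u v
    rw [Fintype.prod_eq_mul_prod_subtype_ne _ t, ht]
    congr 1
    refine Finset.prod_congr rfl fun j _ => ?_
    simp [e, Equiv.funSplitAt, Equiv.piSplitAt, j.2]
  have key : ∀ (φ : N → Prop) (G : Set (Fin T → N)) (ψ : ({j // j ≠ t} → N) → Prop),
      (∀ u v, e.symm (u, v) ∈ G ↔ φ u ∧ ψ v) →
      Pr (fun n : Fin T → N => ∏ s : Fin T, q s.val (n s)) G =
        (∑ u, if φ u then q t.val u else 0) * ∑ v, if ψ v then r v else 0 := by
    intro φ G ψ hG
    rw [Pr_eq_sum_ite, ← e.symm.sum_comp, Fintype.sum_prod_type, Finset.sum_mul_sum]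
    refine Finset.sum_congr rfl fun u _ => Finset.sum_congr rfl fun v _ => ?_
    by_cases hu : φ u <;> by_cases hv : ψ v <;> simp [hG, hu, hv, hw]
  have h1 := key φ {n | φ (n t) ∧ n ∈ D} D' fun u v => by simp [ht, hD']
  have h2 := key φ {n | φ (n t)} (fun _ => True) fun u v => by simp [ht]
  have h3 := key (fun _ => True) D D' fun u v => by simp [hD']
  have h4 := key (fun _ => True) Set.univ (fun _ => True) fun u v => by simp
  rw [Pr_univ, sum_prod_eq_one q hq] at h4
  simp only [if_true, hq, one_mul] at h2 h3 h4
  rw [h1, h2, h3, ← h4, mul_one]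

/-! ### The source chains and the joint law -/

lemma chainW_nonneg {A X : Type*} [Inhabited X] (T : ℕ) (init : A → X → ℝ)
    (K : ℕ → A → X → X → ℝ) (hi : ∀ a x, 0 ≤ init a x) (hK : ∀ t a x x', 0 ≤ K t a x x')
    (a : A) (x : Fin T → X) : 0 ≤ chainW T init K a x := by
  unfold chainW
  split_ifs
  · exact zero_le_one
  · exact mul_nonneg (hi _ _) (Finset.prod_nonneg fun _ _ => hK _ _ _ _)

lemma pad_snoc_of_lt {X : Type*} [Inhabited X] {n : ℕ} (x : Fin n → X) (y : X) {s : ℕ}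
    (hs : s < n) : pad (Fin.snoc x y : Fin (n + 1) → X) s = pad x s := by
  simp only [pad, hs, hs.trans n.lt_succ_self, dif_pos]
  exact Fin.snoc_castSucc (α := fun _ => X) y x ⟨s, hs⟩

lemma pad_snoc_last {X : Type*} [Inhabited X] {n : ℕ} (x : Fin n → X) (y : X) :
    pad (Fin.snoc x y : Fin (n + 1) → X) n = y := by
  simp only [pad, n.lt_succ_self, dif_pos]
  exact Fin.snoc_last (α := fun _ => X) y x

lemma sum_chainW {A X : Type*} [Fintype X] [Inhabited X] (T : ℕ) (init : A → X → ℝ)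
    (K : ℕ → A → X → X → ℝ) (hi : ∀ a, ∑ x, init a x = 1) (hK : ∀ t a x, ∑ x', K t a x x' = 1)
    (a : A) : ∑ x : Fin T → X, chainW T init K a x = 1 := by
  cases T with
  | zero => simp [chainW]
  | succ n =>
    induction n with
    | zero =>
      rw [← (Equiv.funUnique (Fin 1) X).symm.sum_comp]
      simpa [chainW, pad] using hi a
    | succ n ih =>
      rw [← (Fin.snocEquiv fun _ : Fin (n + 2) => X).sum_comp, Fintype.sum_prod_type,
        Finset.sum_comm, ← ih]
      refine Finset.sum_congr rfl fun x _ => ?_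
      have : ∀ y : X, chainW (n + 2) init K a (Fin.snoc x y : Fin (n + 2) → X) =
          chainW (n + 1) init K a x * K n a (pad x n) y := by
        intro y
        simp only [chainW, Nat.add_sub_cancel, Nat.succ_ne_zero, if_false,
          show n + 2 - 1 = n + 1 from rfl]
        rw [Finset.prod_range_succ, pad_snoc_of_lt x y n.succ_pos, pad_snoc_last,
          pad_snoc_of_lt x y n.lt_succ_self, mul_assoc]
        congr 2
        refine Finset.prod_congr rfl fun s hs => ?_
        have hs := Finset.mem_range.mp hs
        rw [pad_snoc_of_lt x y (by omega), pad_snoc_of_lt x y (by omega)]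
      change ∑ y : X, chainW (n + 2) init K a (Fin.snoc x y : Fin (n + 2) → X) = _
      simp only [this]
      rw [← Finset.mul_sum, hK, mul_one]

lemma jointP_nonneg {A X1 X2 N1 N2 : Type*} [Inhabited X1] [Inhabited X2] (T : ℕ)
    (pA : A → ℝ) (init1 : A → X1 → ℝ) (K1 : ℕ → A → X1 → X1 → ℝ)
    (init2 : A → X2 → ℝ) (K2 : ℕ → A → X2 → X2 → ℝ)
    (q1 : ℕ → N1 → ℝ) (q2 : ℕ → N2 → ℝ)
    (hpA : ∀ a, 0 ≤ pA a) (hinit1 : ∀ a x, 0 ≤ init1 a x) (hK1 : ∀ t a x x', 0 ≤ K1 t a x x')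
    (hinit2 : ∀ a x, 0 ≤ init2 a x) (hK2 : ∀ t a x x', 0 ≤ K2 t a x x')
    (hq1 : ∀ t n, 0 ≤ q1 t n) (hq2 : ∀ t n, 0 ≤ q2 t n) (ω : Samp A X1 X2 N1 N2 T) :
    0 ≤ jointP T pA init1 K1 init2 K2 q1 q2 ω := by
  have h1 := chainW_nonneg T init1 K1 hinit1 hK1 ω.1 ω.2.1
  have h2 := chainW_nonneg T init2 K2 hinit2 hK2 ω.1 ω.2.2.1
  have h3 : 0 ≤ ∏ t : Fin T, q1 t.val (ω.2.2.2.1 t) := Finset.prod_nonneg fun _ _ => hq1 _ _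
  have h4 : 0 ≤ ∏ t : Fin T, q2 t.val (ω.2.2.2.2 t) := Finset.prod_nonneg fun _ _ => hq2 _ _
  have h5 := hpA ω.1
  unfold jointP
  positivity

open Classical in
/-- An event that constrains the blocks `A`, `X¹`, `(X², N²)` and `N¹` separately has a
probability that factorizes conditionally on `A`. -/
lemma Pr_jointP_of_iff {A X1 X2 N1 N2 : Type*} [Fintype A] [Fintype X1] [Fintype X2]
    [Fintype N1] [Fintype N2] [Inhabited X1] [Inhabited X2] (T : ℕ)
    (pA : A → ℝ) (init1 : A → X1 → ℝ) (K1 : ℕ → A → X1 → X1 → ℝ)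
    (init2 : A → X2 → ℝ) (K2 : ℕ → A → X2 → X2 → ℝ)
    (q1 : ℕ → N1 → ℝ) (q2 : ℕ → N2 → ℝ) (E : Set (Samp A X1 X2 N1 N2 T))
    (α : Set A) (B : Set (Fin T → X1)) (C : Set ((Fin T → X2) × (Fin T → N2)))
    (D : Set (Fin T → N1))
    (hE : ∀ ω, ω ∈ E ↔ ω.1 ∈ α ∧ ω.2.1 ∈ B ∧ (ω.2.2.1, ω.2.2.2.2) ∈ C ∧ ω.2.2.2.1 ∈ D) :
    Pr (jointP T pA init1 K1 init2 K2 q1 q2) E =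
      ∑ a, if a ∈ α then pA a * Pr (chainW T init1 K1 a) B *
        Pr (fun w : (Fin T → X2) × (Fin T → N2) =>
          chainW T init2 K2 a w.1 * ∏ s : Fin T, q2 s.val (w.2 s)) C *
        Pr (fun n : Fin T → N1 => ∏ s : Fin T, q1 s.val (n s)) D else 0 := by
  rw [Pr_eq_sum_ite, Fintype.sum_prod_type]
  refine Finset.sum_congr rfl fun a _ => ?_
  by_cases ha : a ∈ α
  swap
  · simp [hE, ha]
  have hterm : ∀ (x1 : Fin T → X1) (x2 : Fin T → X2) (n1 : Fin T → N1) (n2 : Fin T → N2),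
      (if (a, x1, x2, n1, n2) ∈ E then
        jointP T pA init1 K1 init2 K2 q1 q2 (a, x1, x2, n1, n2) else 0) =
      pA a * (if x1 ∈ B then chainW T init1 K1 a x1 else 0) *
        ((if (x2, n2) ∈ C then chainW T init2 K2 a x2 * ∏ s : Fin T, q2 s.val (n2 s) else 0) *
          (if n1 ∈ D then ∏ s : Fin T, q1 s.val (n1 s) else 0)) := by
    intro x1 x2 n1 n2
    by_cases hB : x1 ∈ B <;> by_cases hC : (x2, n2) ∈ C <;> by_cases hD : n1 ∈ D <;>
      simp [hE, ha, hB, hC, hD]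
    simp only [jointP]
    ring
  simp only [if_pos ha, Pr_eq_sum_ite, Fintype.sum_prod_type, hterm]
  simp only [← Finset.mul_sum, ← Finset.sum_mul]
  ring

/-- **Equations (24)–(26) of the paper.** For fixed strategies, encoder 1's conditional
belief on `(X²_t, A, Y¹_t, Y²_t, M¹_{t-1}, M²_{t-1})` given its history
`(X¹_{0:t}, Z¹_{0:t})` factorizes as
`P(X²_t, Y²_t, M²_{t-1} ∣ A) · P(Y¹_t ∣ Z¹_t) · μ¹_t(m¹) · b¹_t(a)`. -/
theorem encoder_one_belief_factorization
    {A X1 X2 Z1 Z2 N1 N2 Y1 Y2 M1 M2 : Type*}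
    [Fintype A] [Fintype X1] [Fintype X2] [Fintype Z1] [Fintype Z2]
    [Fintype N1] [Fintype N2] [Fintype Y1] [Fintype Y2] [Fintype M1] [Fintype M2]
    [Inhabited X1] [Inhabited X2] [Inhabited N1] [Inhabited N2]
    [Inhabited M1] [Inhabited M2]
    (T : ℕ)
    (pA : A → ℝ) (init1 : A → X1 → ℝ) (K1 : ℕ → A → X1 → X1 → ℝ)
    (init2 : A → X2 → ℝ) (K2 : ℕ → A → X2 → X2 → ℝ)
    (q1 : ℕ → N1 → ℝ) (q2 : ℕ → N2 → ℝ)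
    (h1 : ℕ → Z1 → N1 → Y1) (h2 : ℕ → Z2 → N2 → Y2)
    (hpA : (∀ a, 0 ≤ pA a) ∧ ∑ a, pA a = 1)
    (hinit1 : ∀ a, (∀ x, 0 ≤ init1 a x) ∧ ∑ x, init1 a x = 1)
    (hK1 : ∀ t a x, (∀ x', 0 ≤ K1 t a x x') ∧ ∑ x', K1 t a x x' = 1)
    (hinit2 : ∀ a, (∀ x, 0 ≤ init2 a x) ∧ ∑ x, init2 a x = 1)
    (hK2 : ∀ t a x, (∀ x', 0 ≤ K2 t a x x') ∧ ∑ x', K2 t a x x' = 1)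
    (hq1 : ∀ t, (∀ n, 0 ≤ q1 t n) ∧ ∑ n, q1 t n = 1)
    (hq2 : ∀ t, (∀ n, 0 ≤ q2 t n) ∧ ∑ n, q2 t n = 1)
    -- arbitrary fixed strategies of the two encoders and memory update rules
    (f1 : Strat X1 Z1) (f2 : Strat X2 Z2)
    (l1 : ℕ → M1 → Y1 → M1) (l2 : ℕ → M2 → Y2 → M2) :
    ∀ t < T, ∀ (xs : ℕ → X1) (zs : ℕ → Z1),
      0 < Pr (jointP T pA init1 K1 init2 K2 q1 q2)
          {ω : Samp A X1 X2 N1 N2 T |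
            (∀ s ≤ t, pad ω.2.1 s = xs s) ∧ (∀ s ≤ t, Z1f T f1 ω s = zs s)} →
      ∀ (x2 : X2) (a : A) (y1 : Y1) (y2 : Y2) (m1 : M1) (m2 : M2),
        cPr (jointP T pA init1 K1 init2 K2 q1 q2)
            {ω : Samp A X1 X2 N1 N2 T |
              pad ω.2.2.1 t = x2 ∧ ω.1 = a ∧ Y1f T h1 f1 ω t = y1 ∧
                Y2f T h2 f2 ω t = y2 ∧ M1f T h1 f1 l1 ω t = m1 ∧ M2f T h2 f2 l2 ω t = m2}
            {ω | (∀ s ≤ t, pad ω.2.1 s = xs s) ∧ (∀ s ≤ t, Z1f T f1 ω s = zs s)} =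
          cPr (jointP T pA init1 K1 init2 K2 q1 q2)
              {ω : Samp A X1 X2 N1 N2 T |
                pad ω.2.2.1 t = x2 ∧ Y2f T h2 f2 ω t = y2 ∧ M2f T h2 f2 l2 ω t = m2}
              {ω | ω.1 = a} *
            cPr (jointP T pA init1 K1 init2 K2 q1 q2)
              {ω : Samp A X1 X2 N1 N2 T | Y1f T h1 f1 ω t = y1}
              {ω | Z1f T f1 ω t = zs t} *
            belM T (jointP T pA init1 K1 init2 K2 q1 q2) h1 f1 l1 t zs m1 *
            belA T (jointP T pA init1 K1 init2 K2 q1 q2) t xs a := by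
  classical
  intro t ht xs zs hpos x2 a y1 y2 m1 m2
  have hp := jointP_nonneg (N1 := N1) (N2 := N2) T pA init1 K1 init2 K2 q1 q2 hpA.1
    (fun a => (hinit1 a).1) (fun t a x => (hK1 t a x).1) (fun a => (hinit2 a).1)
    (fun t a x => (hK2 t a x).1) (fun t => (hq1 t).1) (fun t => (hq2 t).1)
  have hPr := Pr_jointP_of_iff (N1 := N1) (N2 := N2) T pA init1 K1 init2 K2 q1 q2
  -- positivity of the history forces `zs` to be the symbols sent along `xs`
  have hz : ∀ s ≤ t, ∀ x : Fin T → X1, (∀ r ≤ t, pad x r = xs r) →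
      Zseq f1 (pad x) s = zs s := by
    obtain ⟨ω, hω, hωz⟩ := nonempty_of_Pr_pos hpos
    intro s hs x hx
    rw [← hωz s hs]
    exact Zseq_congr f1 _ _ s fun r hr => (hx r (hr.trans hs)).trans (hω r (hr.trans hs)).symm
  have hZt : 0 < Pr (jointP T pA init1 K1 init2 K2 q1 q2)
      {ω : Samp A X1 X2 N1 N2 T | Z1f T f1 ω t = zs t} :=
    hpos.trans_le (Pr_mono hp fun ω hω => hω.2 t le_rfl)
  have hZlt : 0 < Pr (jointP T pA init1 K1 init2 K2 q1 q2)
      {ω : Samp A X1 X2 N1 N2 T | ∀ s < t, Z1f T f1 ω s = zs s} :=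
    hpos.trans_le (Pr_mono hp fun ω hω s hs => hω.2 s hs.le)
  -- `D` and `φ` replace the random symbols `Z¹` by the fixed `zs`, so that they concern only the
  -- noise: `D` its values before time `t`, and `φ` its value at time `t`.
  set B : Set (Fin T → X1) := {x | ∀ s ≤ t, pad x s = xs s} with hB
  set C : Set ((Fin T → X2) × (Fin T → N2)) :=
    {w | pad w.1 t = x2 ∧ h2 t (Zseq f2 (pad w.1) t) (pad w.2 t) = y2 ∧
      Mseq l2 (fun s => h2 s (Zseq f2 (pad w.1) s) (pad w.2 s)) t = m2} with hC
  set D : Set (Fin T → N1) :=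
    {n | Mseq l1 (fun s => h1 s (zs s) (pad n s)) t = m1} with hD
  set φ : N1 → Prop := fun u => h1 t (zs t) u = y1 with hφ
  have hpad : ∀ n : Fin T → N1, pad n t = n ⟨t, ht⟩ := fun n => by simp [pad, ht]
  have hsplit := Pr_prod_split q1 (fun t => (hq1 t).2) ⟨t, ht⟩ φ D (by
    intro n n' hnn
    have : Mseq l1 (fun s => h1 s (zs s) (pad n s)) t =
        Mseq l1 (fun s => h1 s (zs s) (pad n' s)) t := by
      refine Mseq_congr l1 _ _ t fun s hs => ?_
      have hsT := hs.trans ht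
      simp only [pad, hsT, dif_pos]
      rw [hnn ⟨s, hsT⟩ fun h => hs.ne (congrArg Fin.val h)]
    simp only [hD, Set.mem_ofPred_eq, this])
  have hW1 : ∀ a, Pr (chainW T init1 K1 a) Set.univ = 1 := fun a => by
    rw [Pr_univ, sum_chainW T init1 K1 (fun a => (hinit1 a).2) fun t a x => (hK1 t a x).2]
  have hQ1 : Pr (fun n : Fin T → N1 => ∏ s : Fin T, q1 s.val (n s)) Set.univ = 1 := by
    rw [Pr_univ, sum_prod_eq_one q1 fun t => (hq1 t).2]
  have hW2 : ∀ a, Pr (fun w : (Fin T → X2) × (Fin T → N2) =>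
      chainW T init2 K2 a w.1 * ∏ s : Fin T, q2 s.val (w.2 s)) Set.univ = 1 := fun a => by
    simp only [Pr_univ, Fintype.sum_prod_type, ← Finset.mul_sum]
    rw [sum_prod_eq_one q2 fun t => (hq2 t).2]
    simp only [mul_one]
    exact sum_chainW T init2 K2 (fun a => (hinit2 a).2) (fun t a x => (hK2 t a x).2) a
  have hnum := hPr ({ω : Samp A X1 X2 N1 N2 T |
              pad ω.2.2.1 t = x2 ∧ ω.1 = a ∧ Y1f T h1 f1 ω t = y1 ∧
                Y2f T h2 f2 ω t = y2 ∧ M1f T h1 f1 l1 ω t = m1 ∧ M2f T h2 f2 l2 ω t = m2} ∩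
            {ω | (∀ s ≤ t, pad ω.2.1 s = xs s) ∧ (∀ s ≤ t, Z1f T f1 ω s = zs s)})
      {a} B C {n | φ (n ⟨t, ht⟩) ∧ n ∈ D} (by
    intro ω
    have hM : (∀ s ≤ t, Zseq f1 (pad ω.2.1) s = zs s) →
        Mseq l1 (fun s => h1 s (Zseq f1 (pad ω.2.1) s) (pad ω.2.2.2.1 s)) t =
          Mseq l1 (fun s => h1 s (zs s) (pad ω.2.2.2.1 s)) t := fun h =>
      Mseq_congr l1 _ _ t fun s hs => by rw [h s hs.le]
    simp only [Set.mem_inter_iff, Set.mem_ofPred_eq, Set.mem_singleton_iff, hB, hC, hD, hφ,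
      ← hpad]
    constructor
    · rintro ⟨⟨g1, g2, g3, g4, g5, g6⟩, g7, g8⟩
      refine ⟨g2, g7, ⟨g1, g4, g6⟩, ?_, ?_⟩
      · rw [← g8 t le_rfl]
        exact g3
      · rw [← hM g8]
        exact g5
    · rintro ⟨g2, g7, ⟨g1, g4, g6⟩, g3, g5⟩
      have g8 : ∀ s ≤ t, Zseq f1 (pad ω.2.1) s = zs s := fun s hs => hz s hs _ g7
      refine ⟨⟨g1, g2, ?_, g4, ?_, g6⟩, g7, g8⟩
      · rw [← g8 t le_rfl] at g3
        exact g3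
      · rw [← hM g8] at g5
        exact g5)
  have hden := hPr {ω | (∀ s ≤ t, pad ω.2.1 s = xs s) ∧ (∀ s ≤ t, Z1f T f1 ω s = zs s)}
      Set.univ B Set.univ Set.univ (by
    intro ω
    simp only [Set.mem_ofPred_eq, Set.mem_univ, true_and, and_true, hB]
    exact ⟨fun h => h.1, fun h => ⟨h, fun s hs => hz s hs _ h⟩⟩)
  have hden' := hPr {ω | ∀ s ≤ t, pad ω.2.1 s = xs s} Set.univ B Set.univ Set.univ (by
    intro ω
    simp [hB])
  have hA := hPr {ω | ω.1 = a} {a} Set.univ Set.univ Set.univ (by intro ω; simp)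
  have hAC := hPr ({ω : Samp A X1 X2 N1 N2 T |
                pad ω.2.2.1 t = x2 ∧ Y2f T h2 f2 ω t = y2 ∧ M2f T h2 f2 l2 ω t = m2} ∩
              {ω | ω.1 = a}) {a} Set.univ C Set.univ (by
    intro ω
    simp only [Set.mem_inter_iff, Set.mem_ofPred_eq, Set.mem_singleton_iff, Set.mem_univ,
      true_and, and_true, hC]
    exact and_comm)
  have hAB := hPr ({ω : Samp A X1 X2 N1 N2 T | ω.1 = a} ∩ {ω | ∀ s ≤ t, pad ω.2.1 s = xs s})
      {a} B Set.univ Set.univ (by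
    intro ω
    simp [hB])
  have hZ := hPr {ω | Z1f T f1 ω t = zs t} Set.univ {x | Zseq f1 (pad x) t = zs t}
      Set.univ Set.univ (by
    intro ω
    simp [Z1f])
  have hYZ := hPr ({ω : Samp A X1 X2 N1 N2 T | Y1f T h1 f1 ω t = y1} ∩
      {ω | Z1f T f1 ω t = zs t}) Set.univ {x | Zseq f1 (pad x) t = zs t} Set.univ
      {n | φ (n ⟨t, ht⟩)} (by
    intro ω
    simp only [Set.mem_inter_iff, Set.mem_ofPred_eq, Set.mem_univ, true_and, hφ, Y1f, Z1f,
      ← hpad]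
    constructor
    · rintro ⟨g1, g2⟩
      exact ⟨g2, g2 ▸ g1⟩
    · rintro ⟨g2, g1⟩
      exact ⟨g2.symm ▸ g1, g2⟩)
  have hZs := hPr {ω | ∀ s < t, Z1f T f1 ω s = zs s} Set.univ
      {x | ∀ s < t, Zseq f1 (pad x) s = zs s} Set.univ Set.univ (by
    intro ω
    simp [Z1f])
  have hMZ := hPr ({ω : Samp A X1 X2 N1 N2 T | M1f T h1 f1 l1 ω t = m1} ∩
      {ω | ∀ s < t, Z1f T f1 ω s = zs s}) Set.univ
      {x | ∀ s < t, Zseq f1 (pad x) s = zs s} Set.univ D (by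
    intro ω
    have hM : (∀ s < t, Zseq f1 (pad ω.2.1) s = zs s) →
        Mseq l1 (fun s => h1 s (Zseq f1 (pad ω.2.1) s) (pad ω.2.2.2.1 s)) t =
          Mseq l1 (fun s => h1 s (zs s) (pad ω.2.2.2.1 s)) t := fun h =>
      Mseq_congr l1 _ _ t fun s hs => by rw [h s hs]
    simp only [Set.mem_inter_iff, Set.mem_ofPred_eq, Set.mem_univ, true_and, hD]
    constructor
    · rintro ⟨g1, g2⟩
      exact ⟨g2, (hM g2).symm.trans g1⟩
    · rintro ⟨g2, g1⟩
      exact ⟨(hM g2).trans g1, g2⟩)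
  simp only [Set.mem_univ, if_true, Set.mem_singleton_iff, Finset.sum_ite_eq',
    Finset.mem_univ, hW1, hW2, hQ1, mul_one]
    at hnum hden hden' hA hAC hAB hZ hYZ hZs hMZ
  rw [← Finset.sum_mul, ← hZ] at hYZ
  rw [← Finset.sum_mul, ← hZs] at hMZ
  rw [hsplit] at hnum
  rw [← hden] at hden'
  simp only [cPr, belM, belA]
  rw [hnum, hden', hA, hAC, hAB, hYZ, hMZ, mul_div_cancel_left₀ _ hZt.ne',
    mul_div_cancel_left₀ _ hZlt.ne']
  -- if `pA a = 0`, the conditional probability given `A = a` is a junk `0 / 0`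
  by_cases ha : pA a = 0
  · simp [ha]
  · have hne := hpos.ne'
    field_simp

end MTC
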